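/- Let Σ₁, Σ₂ be positive definite n×n real matrices such that all eigenvalues of Σ₂^{-1/2} Σ₁ Σ₂^{-1/2} are at least 1/2, and let μ₁, μ₂ ∈ ℝⁿ. Then the total variation distance between the Gaussian measures N(μ₁, Σ₁) and N(μ₂, Σ₂) is at most ½·√(‖Σ₂^{-1/2}Σ₁Σ₂^{-1/2} - I‖_F² + (μ₂-μ₁)ᵀΣ₂^{-1}(μ₂-μ₁)). -/

import Mathlib

open MeasureTheory Matrix

/-- The multivariate Gaussian measure `N(μ, Σ)` on `ℝⁿ`, given by its density with
respect to Lebesgue measure (here `S = Σ` is the covariance matrix). -/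
noncomputable def gaussianMeasure (n : ℕ) (μ : Fin n → ℝ)
    (S : Matrix (Fin n) (Fin n) ℝ) : Measure (Fin n → ℝ) :=
  volume.withDensity fun x =>
    ENNReal.ofReal (((2 * Real.pi) ^ n * S.det) ^ (-(1 : ℝ) / 2) *
      Real.exp (-(1 / 2) * ((x - μ) ⬝ᵥ S⁻¹ *ᵥ (x - μ))))

/-- Total variation distance between two measures: the supremum over measurable sets `A`
of `|μ(A) - ν(A)|`. -/
noncomputable def tvDist {α : Type*} [MeasurableSpace α] (μ ν : Measure α) : ℝ :=
  sSup {r : ℝ | ∃ A : Set α, MeasurableSet A ∧ r = |(μ A).toReal - (ν A).toReal|}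

/-- Frobenius norm of a matrix. -/
noncomputable def frobNorm {n : ℕ} (M : Matrix (Fin n) (Fin n) ℝ) : ℝ :=
  Real.sqrt (∑ i : Fin n, ∑ j : Fin n, M i j ^ 2)

/-!
By Pinsker's inequality the squared total variation distance is at most half of the Kullback-Leibler
divergence, and for Gaussian measures `2 KL = tr A - n - log det A + (μ₂ - μ₁)ᵀ Σ₂⁻¹ (μ₂ - μ₁)` with
`A = Σ₂^{-1/2} Σ₁ Σ₂^{-1/2}`. In terms of the eigenvalues `x` of `A` it remains to bound
`∑ (x - 1 - log x)` by `‖A - 1‖_F² = ∑ (x - 1)²`, which holds termwise as soon as `x ≥ 1/2`.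

Pinsker's inequality is the Donsker-Varadhan bound `∫ f ∂P - log ∫ exp f ∂Q ≤ KL(P, Q)` for
multiples of the indicator of a set, with Hoeffding's lemma controlling the exponential moment. The
closed form needs the integral of a quadratic form, hence the first two moments, which `N(μ, Σ)`
inherits from the standard Gaussian measure, of which it is the image under `y ↦ μ + Σ^{1/2} y`.
-/

open ProbabilityTheory InformationTheory WithLp
open scoped ENNReal NNReal MatrixOrder

section KullbackLeibler

variable {α : Type*} [MeasurableSpace α] {P Q : Measure α} [IsProbabilityMeasure P]
  [IsProbabilityMeasure Q]

theorem integral_sub_log_integral_exp_le_klDiv (h : klDiv P Q ≠ ∞) {f : α → ℝ}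
    (hfP : Integrable f P) (hfQ : Integrable (fun x => Real.exp (f x)) Q) :
    ∫ x, f x ∂P - Real.log (∫ x, Real.exp (f x) ∂Q) ≤ (klDiv P Q).toReal := by
  obtain ⟨hPQ, hllr⟩ := klDiv_ne_top_iff.mp h
  have := isProbabilityMeasure_tilted hfQ
  have hgibbs := integral_llr_add_sub_measure_univ_nonneg
    (hPQ.trans (absolutelyContinuous_tilted hfQ)) (integrable_llr_tilted_right hPQ hfP hllr hfQ)
  rw [integral_llr_tilted_right hPQ hfP hfQ hllr, probReal_univ, probReal_univ] at hgibbs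
  rw [toReal_klDiv_of_measure_eq hPQ (by simp only [measure_univ])]
  linarith

theorem cgf_le_of_mem_Icc {X : α → ℝ} {a b : ℝ} (hX : AEMeasurable X Q)
    (hab : ∀ᵐ x ∂Q, X x ∈ Set.Icc a b) (t : ℝ) :
    cgf X Q t ≤ t * ∫ x, X x ∂Q + (b - a) ^ 2 * t ^ 2 / 8 := by
  have hoeffding := (hasSubgaussianMGF_of_mem_Icc hX hab).cgf_le t
  have hshift : cgf (fun x => X x - ∫ y, X y ∂Q) Q t = cgf X Q t - t * ∫ x, X x ∂Q := by
    have hpos : 0 < mgf X Q t := mgf_pos (integrable_exp_mul_of_mem_Icc hX hab)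
    simp only [sub_eq_add_neg]
    rw [cgf, mgf_add_const, Real.log_mul hpos.ne' (Real.exp_pos _).ne', Real.log_exp, cgf]
    ring
  rw [hshift, NNReal.coe_pow, NNReal.coe_div, coe_nnnorm, div_pow, Real.norm_eq_abs, sq_abs,
    NNReal.coe_ofNat] at hoeffding
  linarith

theorem two_mul_sq_measureReal_sub_le_klDiv (h : klDiv P Q ≠ ∞) {A : Set α}
    (hA : MeasurableSet A) : 2 * (P.real A - Q.real A) ^ 2 ≤ (klDiv P Q).toReal := by
  -- This `s` maximises the resulting lower bound `s * (P.real A - Q.real A) - s ^ 2 / 8`.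
  let s : ℝ := 4 * (P.real A - Q.real A)
  let X : α → ℝ := A.indicator 1
  have hX : Measurable X := measurable_one.indicator hA
  have hX01 (x : α) : X x ∈ Set.Icc (0 : ℝ) 1 := by by_cases hx : x ∈ A <;> simp [X, hx]
  have hdv := integral_sub_log_integral_exp_le_klDiv h (f := fun x => s * X x)
    ((Integrable.of_mem_Icc 0 1 hX.aemeasurable (ae_of_all _ hX01)).const_mul s)
    (integrable_exp_mul_of_mem_Icc hX.aemeasurable (ae_of_all _ hX01))
  have hhoeffding := cgf_le_of_mem_Icc hX.aemeasurable (ae_of_all Q hX01) s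
  simp only [cgf, mgf] at hhoeffding
  simp only [X, integral_const_mul, integral_indicator_one hA, s] at hdv hhoeffding
  linarith

theorem tvDist_le_sqrt_klDiv (h : klDiv P Q ≠ ∞) :
    tvDist P Q ≤ √((klDiv P Q).toReal / 2) := by
  refine csSup_le ⟨_, ∅, MeasurableSet.empty, rfl⟩ ?_
  rintro r ⟨A, hA, rfl⟩
  refine Real.abs_le_sqrt ?_
  have := two_mul_sq_measureReal_sub_le_klDiv h hA
  simp only [measureReal_def] at this
  linarith

end KullbackLeibler

section WithDensity

variable {α β : Type*} [MeasurableSpace α] [MeasurableSpace β]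

theorem map_withDensity_comp {ν : Measure α} {f : α → β} (hf : Measurable f) {p : β → ℝ≥0∞}
    (hp : Measurable p) : (ν.withDensity (p ∘ f)).map f = (ν.map f).withDensity p := by
  ext A hA
  rw [Measure.map_apply hf hA, withDensity_apply _ (hf hA), withDensity_apply _ hA,
    setLIntegral_map hA hp hf]
  rfl

variable {ν : Measure α} {p q : α → ℝ}

theorem withDensity_ofReal_eq_withDensity_div (hp : Measurable p) (hq : Measurable q)
    (hq0 : ∀ x, 0 < q x) :
    ν.withDensity (fun x => .ofReal (p x)) =
      (ν.withDensity fun x => .ofReal (q x)).withDensity fun x => .ofReal (p x / q x) := by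
  have hdiv : Measurable fun x => p x / q x := hp.div hq
  rw [← withDensity_mul _ hq.ennreal_ofReal hdiv.ennreal_ofReal]
  congr with x
  rw [Pi.mul_apply, ← ENNReal.ofReal_mul (hq0 x).le, mul_div_cancel₀ _ (hq0 x).ne']

theorem withDensity_ofReal_absolutelyContinuous_withDensity_ofReal (hp : Measurable p)
    (hq : Measurable q) (hq0 : ∀ x, 0 < q x) :
    ν.withDensity (fun x => .ofReal (p x)) ≪ ν.withDensity fun x => .ofReal (q x) := by
  rw [withDensity_ofReal_eq_withDensity_div hp hq hq0]
  exact withDensity_absolutelyContinuous _ _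

theorem llr_withDensity_ofReal [SigmaFinite ν] (hp : Measurable p) (hp0 : ∀ x, 0 < p x)
    (hq : Measurable q) (hq0 : ∀ x, 0 < q x) :
    llr (ν.withDensity fun x => .ofReal (p x)) (ν.withDensity fun x => .ofReal (q x))
      =ᵐ[ν.withDensity fun x => .ofReal (p x)] fun x => Real.log (p x) - Real.log (q x) := by
  have hac := withDensity_ofReal_absolutelyContinuous_withDensity_ofReal (ν := ν) hp hq hq0
  have hrn := (ν.withDensity fun x => .ofReal (q x)).rnDeriv_withDensity
    (hp.div hq).ennreal_ofReal
  simp only [Pi.div_apply, ← withDensity_ofReal_eq_withDensity_div hp hq hq0] at hrn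
  filter_upwards [hac.ae_le hrn] with x hx
  rw [llr, hx, ENNReal.toReal_ofReal (div_pos (hp0 x) (hq0 x)).le,
    Real.log_div (hp0 x).ne' (hq0 x).ne']

theorem pi_withDensity_ofReal {ι : Type*} [Fintype ι] {E : ι → Type*} [∀ i, MeasurableSpace (E i)]
    {ν : ∀ i, Measure (E i)} [∀ i, SigmaFinite (ν i)] {p : ∀ i, E i → ℝ}
    (hp : ∀ i, Integrable (p i) (ν i)) (hp0 : ∀ i x, 0 ≤ p i x) :
    Measure.pi (fun i => (ν i).withDensity fun x => .ofReal (p i x)) =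
      (Measure.pi ν).withDensity fun x => .ofReal (∏ i, p i (x i)) := by
  have (i : ι) : IsFiniteMeasure ((ν i).withDensity fun x => .ofReal (p i x)) :=
    isFiniteMeasure_withDensity_ofReal (hp i).hasFiniteIntegral
  refine Measure.pi_eq fun s hs => ?_
  have hprod : Integrable (fun x : ∀ i, E i => ∏ i, p i (x i))
      (Measure.pi fun i => (ν i).restrict (s i)) :=
    Integrable.fintype_prod_dep fun i => (hp i).restrict
  rw [withDensity_apply _ (MeasurableSet.univ_pi hs), Measure.restrict_pi_pi,
    ← ofReal_integral_eq_lintegral_ofReal hprod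
      (ae_of_all _ fun x => Finset.prod_nonneg fun i _ => hp0 i (x i)),
    integral_fintype_prod_eq_prod,
    ENNReal.ofReal_prod_of_nonneg fun i _ => integral_nonneg (hp0 i)]
  refine Finset.prod_congr rfl fun i _ => ?_
  rw [withDensity_apply _ (hs i), ofReal_integral_eq_lintegral_ofReal (hp i).restrict
    (ae_of_all _ (hp0 i))]

theorem map_add_mulVec_volume {ι : Type*} [Fintype ι] [DecidableEq ι] {T : Matrix ι ι ℝ}
    (hT : T.det ≠ 0) (b : ι → ℝ) :
    (volume : Measure (ι → ℝ)).map (fun y => b + T *ᵥ y) =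
      ENNReal.ofReal |T.det⁻¹| • volume := by
  have hcomp : (fun y : ι → ℝ => b + T *ᵥ y) = (b + ·) ∘ toLin' T := rfl
  rw [hcomp, ← Measure.map_map (measurable_const_add b) (LinearMap.continuous_on_pi _).measurable,
    Real.map_matrix_volume_pi_eq_smul_volume_pi hT, Measure.map_smul, map_add_left_eq_self]

end WithDensity

section QuadraticForm

variable {ι : Type*} [Fintype ι] {P : Measure (ι → ℝ)} [IsProbabilityMeasure P]

theorem integrable_dotProduct_mulVec (hP : ∀ i, MemLp (fun x => x i) 2 P) (B : Matrix ι ι ℝ)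
    (c : ι → ℝ) : Integrable (fun x => (x - c) ⬝ᵥ B *ᵥ (x - c)) P := by
  have hsub (i : ι) : MemLp (fun x => (x - c) i) 2 P := (hP i).sub (memLp_const (c i))
  simp only [dotProduct, mulVec]
  exact integrable_finsetSum _ fun i _ => (hsub i).integrable_mul
    (memLp_finsetSum (p := 2) _ fun j _ => (hsub j).const_mul (B i j))

theorem integral_dotProduct_mulVec (hP : ∀ i, MemLp (fun x => x i) 2 P) (B : Matrix ι ι ℝ)
    {m : ι → ℝ} (hm : ∀ i, ∫ x, x i ∂P = m i) {C : Matrix ι ι ℝ}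
    (hC : ∀ i j, cov[fun x => x i, fun x => x j; P] = C i j) (c : ι → ℝ) :
    ∫ x, (x - c) ⬝ᵥ B *ᵥ (x - c) ∂P = (B * C).trace + (m - c) ⬝ᵥ B *ᵥ (m - c) := by
  have hsub (i : ι) : MemLp (fun x => (x - c) i) 2 P := (hP i).sub (memLp_const (c i))
  have hmean (i : ι) : ∫ x, (x - c) i ∂P = (m - c) i := by
    simp only [Pi.sub_apply]
    rw [integral_sub ((hP i).integrable one_le_two) (integrable_const _), hm, integral_const,
      probReal_univ, one_smul]
  have hmul (i j : ι) : ∫ x, (x - c) i * (B i j * (x - c) j) ∂P =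
      B i j * C j i + (m - c) i * (B i j * (m - c) j) := by
    have hcov : cov[fun x => (x - c) j, fun x => (x - c) i; P] = C j i := by
      simp only [Pi.sub_apply]
      rw [covariance_sub_const_left ((hP j).integrable one_le_two),
        covariance_sub_const_right ((hP i).integrable one_le_two), hC]
    rw [covariance_eq_sub (hsub j) (hsub i), hmean, hmean] at hcov
    simp only [mul_left_comm _ (B i j), integral_const_mul]
    rw [← hcov]
    simp only [Pi.mul_apply, mul_comm]
    ring
  have hint (i j : ι) : Integrable (fun x => (x - c) i * (B i j * (x - c) j)) P :=
    (hsub i).integrable_mul ((hsub j).const_mul (B i j))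
  simp only [dotProduct, mulVec, Finset.mul_sum]
  rw [integral_finsetSum _ fun i _ => integrable_finsetSum _ fun j _ => hint i j]
  simp only [integral_finsetSum _ fun j _ => hint _ j, hmul, Finset.sum_add_distrib, trace,
    diag_apply, mul_apply]

end QuadraticForm

section Gaussian

variable {n : ℕ}

/-- The density of `N(μ, Σ)`, `Σ = S` positive definite, with respect to Lebesgue measure on `ℝⁿ`;
it separates the integrand of `gaussianMeasure` from its `ENNReal.ofReal`. -/
noncomputable def gaussianDensity (μ : Fin n → ℝ) (S : Matrix (Fin n) (Fin n) ℝ)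
    (x : Fin n → ℝ) : ℝ :=
  ((2 * Real.pi) ^ n * S.det) ^ (-(1 : ℝ) / 2) *
    Real.exp (-(1 / 2) * ((x - μ) ⬝ᵥ S⁻¹ *ᵥ (x - μ)))

theorem gaussianMeasure_eq_withDensity (μ : Fin n → ℝ) (S : Matrix (Fin n) (Fin n) ℝ) :
    gaussianMeasure n μ S = volume.withDensity fun x => .ofReal (gaussianDensity μ S x) := rfl

variable {μ μ₁ μ₂ : Fin n → ℝ} {S S₁ S₂ T : Matrix (Fin n) (Fin n) ℝ}

@[fun_prop]
theorem measurable_gaussianDensity : Measurable (gaussianDensity μ S) := by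
  refine Continuous.measurable ?_
  unfold gaussianDensity
  fun_prop

theorem gaussianDensity_pos (hS : S.PosDef) (x : Fin n → ℝ) : 0 < gaussianDensity μ S x :=
  mul_pos (Real.rpow_pos_of_pos (mul_pos (by positivity) hS.det_pos) _) (Real.exp_pos _)

theorem log_gaussianDensity (hS : S.PosDef) (x : Fin n → ℝ) :
    Real.log (gaussianDensity μ S x) =
      -(1 / 2) * (n * Real.log (2 * Real.pi) + Real.log S.det + (x - μ) ⬝ᵥ S⁻¹ *ᵥ (x - μ)) := by
  have hdet := hS.det_pos
  rw [gaussianDensity, Real.log_mul (by positivity) (Real.exp_pos _).ne', Real.log_exp,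
    Real.log_rpow (by positivity), Real.log_mul (by positivity) hdet.ne', Real.log_pow]
  ring

theorem gaussianDensity_zero_one (x : Fin n → ℝ) :
    gaussianDensity 0 1 x = ∏ i, gaussianPDFReal 0 1 (x i) := by
  have hconst : ((2 * Real.pi) ^ n) ^ (-(1 : ℝ) / 2) = (√(2 * Real.pi))⁻¹ ^ n := by
    rw [neg_div, ← Real.rpow_pow_comm (by positivity), Real.rpow_neg (by positivity),
      ← Real.sqrt_eq_rpow]
  simp only [gaussianDensity, gaussianPDFReal, Finset.prod_mul_distrib, ← Real.exp_sum, det_one,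
    mul_one, hconst, Finset.prod_const, Finset.card_univ, Fintype.card_fin, NNReal.coe_one,
    sub_zero, inv_one, one_mulVec, dotProduct, Finset.mul_sum]
  congr 2
  exact Finset.sum_congr rfl fun i _ => by ring

theorem pi_gaussianReal_zero_one_eq_gaussianMeasure :
    Measure.pi (fun _ : Fin n => gaussianReal 0 1) = gaussianMeasure n 0 1 := by
  have hstd : gaussianReal 0 1 = volume.withDensity fun x => .ofReal (gaussianPDFReal 0 1 x) :=
    gaussianReal_of_var_ne_zero 0 one_ne_zero
  simp only [gaussianMeasure_eq_withDensity, gaussianDensity_zero_one, hstd]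
  exact pi_withDensity_ofReal (fun _ => integrable_gaussianPDFReal 0 1)
    fun _ => gaussianPDFReal_nonneg 0 1

theorem gaussianDensity_add_mulVec (hT : T.det ≠ 0) (hS : 0 ≤ S.det) (b m y : Fin n → ℝ) :
    |T.det| * gaussianDensity (b + T *ᵥ m) (T * S * Tᵀ) (b + T *ᵥ y) = gaussianDensity m S y := by
  have hnorm : |T.det| * ((2 * Real.pi) ^ n * (T * S * Tᵀ).det) ^ (-(1 : ℝ) / 2) =
      ((2 * Real.pi) ^ n * S.det) ^ (-(1 : ℝ) / 2) := by
    have hdet : (2 * Real.pi) ^ n * (T * S * Tᵀ).det = T.det ^ 2 * ((2 * Real.pi) ^ n * S.det) := by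
      rw [det_mul, det_mul, det_transpose]
      ring
    rw [hdet, Real.mul_rpow (sq_nonneg _) (by positivity), neg_div, Real.rpow_neg (sq_nonneg _),
      ← Real.sqrt_eq_rpow, Real.sqrt_sq_eq_abs, mul_inv_cancel_left₀ (abs_pos.mpr hT).ne']
  have hquad : (T *ᵥ (y - m)) ⬝ᵥ (T * S * Tᵀ)⁻¹ *ᵥ (T *ᵥ (y - m)) = (y - m) ⬝ᵥ S⁻¹ *ᵥ (y - m) := by
    have hinv : T⁻¹ * T = 1 := nonsing_inv_mul _ hT.isUnit
    rw [Matrix.mul_inv_rev, Matrix.mul_inv_rev, mulVec_mulVec, Matrix.mul_assoc, Matrix.mul_assoc,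
      hinv, Matrix.mul_one, ← mulVec_mulVec, ← transpose_nonsing_inv, dotProduct_mulVec,
      vecMul_transpose, mulVec_mulVec, hinv, one_mulVec]
  rw [gaussianDensity, add_sub_add_left_eq_sub, ← mulVec_sub, hquad, ← mul_assoc, hnorm,
    gaussianDensity]

theorem map_add_mulVec_gaussianMeasure (hT : T.det ≠ 0) (hS : 0 ≤ S.det) (b m : Fin n → ℝ) :
    (gaussianMeasure n m S).map (fun y => b + T *ᵥ y) =
      gaussianMeasure n (b + T *ᵥ m) (T * S * Tᵀ) := by
  have hmeas : Measurable fun y : Fin n → ℝ => b + T *ᵥ y :=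
    Continuous.measurable (by fun_prop)
  have hdens : (fun y => ENNReal.ofReal (gaussianDensity m S y)) =
      (ENNReal.ofReal |T.det| • fun x =>
        .ofReal (gaussianDensity (b + T *ᵥ m) (T * S * Tᵀ) x)) ∘ fun y => b + T *ᵥ y := by
    ext y
    rw [Function.comp_apply, Pi.smul_apply, smul_eq_mul, ← ENNReal.ofReal_mul (abs_nonneg _),
      gaussianDensity_add_mulVec hT hS]
  rw [gaussianMeasure_eq_withDensity, hdens, map_withDensity_comp hmeas (by fun_prop),
    map_add_mulVec_volume hT, withDensity_smul_measure, withDensity_smul _ (by fun_prop), smul_smul,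
    ← ENNReal.ofReal_mul (abs_nonneg _), ← abs_mul, inv_mul_cancel₀ hT, abs_one,
    ENNReal.ofReal_one, one_smul, gaussianMeasure_eq_withDensity]

theorem gaussianMeasure_eq_map_multivariateGaussian (hS : S.PosDef) (μ : Fin n → ℝ) :
    gaussianMeasure n μ S = (multivariateGaussian (toLp 2 μ) S).map ofLp := by
  have hsq : CFC.sqrt S * CFC.sqrt S = S := CFC.sqrt_mul_sqrt_self S hS.posSemidef.nonneg
  have hsymm : (CFC.sqrt S)ᵀ = CFC.sqrt S := (CFC.sqrt_nonneg S).isSelfAdjoint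
  have hdet : (CFC.sqrt S).det ≠ 0 := fun h => hS.det_pos.ne' (by rw [← hsq, det_mul, h, mul_zero])
  have hmap := map_add_mulVec_gaussianMeasure (S := 1) hdet (by simp) μ 0
  rw [mulVec_zero, add_zero, Matrix.mul_one, hsymm, hsq,
    ← pi_gaussianReal_zero_one_eq_gaussianMeasure] at hmap
  rw [← hmap, multivariateGaussian, ← map_pi_eq_stdGaussian, Measure.map_map, Measure.map_map]
  · congr 1
  all_goals fun_prop

theorem isProbabilityMeasure_gaussianMeasure (hS : S.PosDef) :
    IsProbabilityMeasure (gaussianMeasure n μ S) := by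
  rw [gaussianMeasure_eq_map_multivariateGaussian hS]
  exact Measure.isProbabilityMeasure_map (by fun_prop)

theorem measurePreserving_eval_gaussianMeasure (hS : S.PosDef) (i : Fin n) :
    MeasurePreserving (fun x : Fin n → ℝ => x i) (gaussianMeasure n μ S)
      (gaussianReal (μ i) (S i i).toNNReal) := by
  refine ⟨measurable_pi_apply i, ?_⟩
  rw [gaussianMeasure_eq_map_multivariateGaussian hS,
    Measure.map_map (measurable_pi_apply i) (by fun_prop)]
  exact (measurePreserving_eval_multivariateGaussian hS.posSemidef).map_eq

theorem memLp_two_eval_gaussianMeasure (hS : S.PosDef) (i : Fin n) :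
    MemLp (fun x => x i) 2 (gaussianMeasure n μ S) :=
  (memLp_id_gaussianReal 2).comp_measurePreserving (measurePreserving_eval_gaussianMeasure hS i)

theorem integral_eval_gaussianMeasure (hS : S.PosDef) (i : Fin n) :
    ∫ x, x i ∂gaussianMeasure n μ S = μ i := by
  rw [(measurePreserving_eval_gaussianMeasure hS i).hasLaw.integral_eq, integral_id_gaussianReal]

theorem covariance_eval_gaussianMeasure (hS : S.PosDef) (i j : Fin n) :
    cov[fun x => x i, fun x => x j; gaussianMeasure n μ S] = S i j := by
  have hmeas (k : Fin n) : AEStronglyMeasurable (fun x : Fin n → ℝ => x k)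
      ((multivariateGaussian (toLp 2 μ) S).map ofLp) :=
    (measurable_pi_apply k).aestronglyMeasurable
  rw [gaussianMeasure_eq_map_multivariateGaussian hS,
    covariance_map_fun (hmeas i) (hmeas j) (by fun_prop)]
  exact covariance_eval_multivariateGaussian hS.posSemidef i j

theorem integrable_log_gaussianDensity (hS₁ : S₁.PosDef) (hS₂ : S₂.PosDef) :
    Integrable (fun x => Real.log (gaussianDensity μ₂ S₂ x)) (gaussianMeasure n μ₁ S₁) := by
  have := isProbabilityMeasure_gaussianMeasure (μ := μ₁) hS₁
  simp only [log_gaussianDensity hS₂]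
  exact ((integrable_const _).add (integrable_dotProduct_mulVec
    (memLp_two_eval_gaussianMeasure hS₁) S₂⁻¹ μ₂)).const_mul _

theorem integral_log_gaussianDensity (hS₁ : S₁.PosDef) (hS₂ : S₂.PosDef) :
    ∫ x, Real.log (gaussianDensity μ₂ S₂ x) ∂gaussianMeasure n μ₁ S₁ =
      -(1 / 2) * (n * Real.log (2 * Real.pi) + Real.log S₂.det +
        ((S₂⁻¹ * S₁).trace + (μ₁ - μ₂) ⬝ᵥ S₂⁻¹ *ᵥ (μ₁ - μ₂))) := by
  have := isProbabilityMeasure_gaussianMeasure (μ := μ₁) hS₁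
  have hmem := memLp_two_eval_gaussianMeasure (μ := μ₁) hS₁
  simp only [log_gaussianDensity hS₂]
  rw [integral_const_mul, integral_add (integrable_const _) (integrable_dotProduct_mulVec hmem _ _),
    integral_dotProduct_mulVec hmem _ (integral_eval_gaussianMeasure hS₁)
      (covariance_eval_gaussianMeasure hS₁), integral_const, probReal_univ, one_smul]

theorem llr_gaussianMeasure (hS₁ : S₁.PosDef) (hS₂ : S₂.PosDef) :
    llr (gaussianMeasure n μ₁ S₁) (gaussianMeasure n μ₂ S₂) =ᵐ[gaussianMeasure n μ₁ S₁]
      fun x => Real.log (gaussianDensity μ₁ S₁ x) - Real.log (gaussianDensity μ₂ S₂ x) :=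
  llr_withDensity_ofReal measurable_gaussianDensity (gaussianDensity_pos hS₁)
    measurable_gaussianDensity (gaussianDensity_pos hS₂)

theorem gaussianMeasure_absolutelyContinuous (hS₂ : S₂.PosDef) :
    gaussianMeasure n μ₁ S₁ ≪ gaussianMeasure n μ₂ S₂ :=
  withDensity_ofReal_absolutelyContinuous_withDensity_ofReal measurable_gaussianDensity
    measurable_gaussianDensity (gaussianDensity_pos hS₂)

theorem klDiv_gaussianMeasure_ne_top (hS₁ : S₁.PosDef) (hS₂ : S₂.PosDef) :
    klDiv (gaussianMeasure n μ₁ S₁) (gaussianMeasure n μ₂ S₂) ≠ ∞ :=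
  klDiv_ne_top (gaussianMeasure_absolutelyContinuous hS₂) <|
    (integrable_congr (llr_gaussianMeasure hS₁ hS₂)).mpr <|
      (integrable_log_gaussianDensity hS₁ hS₁).sub (integrable_log_gaussianDensity hS₁ hS₂)

theorem toReal_klDiv_gaussianMeasure (hS₁ : S₁.PosDef) (hS₂ : S₂.PosDef) :
    (klDiv (gaussianMeasure n μ₁ S₁) (gaussianMeasure n μ₂ S₂)).toReal =
      1 / 2 * ((S₂⁻¹ * S₁).trace - n - Real.log (S₂⁻¹ * S₁).det +
        (μ₂ - μ₁) ⬝ᵥ S₂⁻¹ *ᵥ (μ₂ - μ₁)) := by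
  have := isProbabilityMeasure_gaussianMeasure (μ := μ₁) hS₁
  have := isProbabilityMeasure_gaussianMeasure (μ := μ₂) hS₂
  have hlogdet : Real.log (S₂⁻¹ * S₁).det = Real.log S₁.det - Real.log S₂.det := by
    rw [det_mul, det_nonsing_inv, Ring.inverse_eq_inv', Real.log_mul (inv_ne_zero hS₂.det_pos.ne')
      hS₁.det_pos.ne', Real.log_inv]
    ring
  have hswap : (μ₂ - μ₁) ⬝ᵥ S₂⁻¹ *ᵥ (μ₂ - μ₁) = (μ₁ - μ₂) ⬝ᵥ S₂⁻¹ *ᵥ (μ₁ - μ₂) := by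
    rw [← neg_sub, mulVec_neg, neg_dotProduct_neg]
  rw [toReal_klDiv_of_measure_eq (gaussianMeasure_absolutelyContinuous hS₂)
      (by simp only [measure_univ]), integral_congr_ae (llr_gaussianMeasure hS₁ hS₂),
    integral_sub (integrable_log_gaussianDensity hS₁ hS₁) (integrable_log_gaussianDensity hS₁ hS₂),
    integral_log_gaussianDensity hS₁ hS₁, integral_log_gaussianDensity hS₁ hS₂,
    nonsing_inv_mul _ hS₁.det_pos.ne'.isUnit, trace_one, Fintype.card_fin, sub_self,
    zero_dotProduct, hlogdet, hswap]
  ring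

end Gaussian

theorem sub_one_sub_log_le_sq {x : ℝ} (hx : 1 / 2 ≤ x) : x - 1 - Real.log x ≤ (x - 1) ^ 2 := by
  have hx0 : 0 < x := by linarith
  rcases le_total x 1 with h1 | h1
  -- `sinh y ≤ y` at `y = log x ≤ 0` reads `(x - x⁻¹) / 2 ≤ log x`.
  · have hsinh := Real.sinh_le_self_iff.mpr (Real.log_nonpos hx0.le h1)
    rw [Real.sinh_log hx0] at hsinh
    have hfactor : (x - 1) ^ 2 - (x - 1) + (x - x⁻¹) / 2 = (1 - x) ^ 2 * (2 * x - 1) / (2 * x) := by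
      field_simp
      ring
    have : 0 ≤ (1 - x) ^ 2 * (2 * x - 1) / (2 * x) :=
      div_nonneg (mul_nonneg (sq_nonneg _) (by linarith)) (by linarith)
    linarith
  · have hlog := Real.one_sub_inv_le_log_of_pos hx0
    have hfactor : x - 2 + x⁻¹ = (x - 1) ^ 2 * x⁻¹ := by
      field_simp
      ring
    have : (x - 1) ^ 2 * x⁻¹ ≤ (x - 1) ^ 2 :=
      mul_le_of_le_one_right (sq_nonneg _) (inv_le_one_of_one_le₀ h1)
    linarith

theorem le_eigenvalues_of_posSemidef_sub_smul_one {ι : Type*} [Fintype ι] [DecidableEq ι]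
    {A : Matrix ι ι ℝ} (hA : A.IsHermitian) {r : ℝ}
    (hr : (A - r • (1 : Matrix ι ι ℝ)).PosSemidef) (i : ι) :
    r ≤ hA.eigenvalues i := by
  have hle : algebraMap ℝ (Matrix ι ι ℝ) r ≤ A := by
    rwa [Algebra.algebraMap_eq_smul_one, Matrix.le_iff]
  exact (algebraMap_le_iff_le_spectrum hA.isSelfAdjoint).mp hle _
    (hA.eigenvalues_mem_spectrum_real i)

section Frobenius

variable {n : ℕ} (A : Matrix (Fin n) (Fin n) ℝ)

theorem frobNorm_sq : frobNorm A ^ 2 = (A * Aᵀ).trace := by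
  rw [frobNorm, Real.sq_sqrt (by positivity)]
  simp only [trace, diag_apply, mul_apply, transpose_apply, sq]

theorem frobNorm_sub_one_sq :
    frobNorm (A - 1) ^ 2 = frobNorm A ^ 2 - 2 * A.trace + n := by
  simp only [frobNorm_sq, transpose_sub, transpose_one, Matrix.sub_mul, Matrix.mul_sub,
    Matrix.mul_one, Matrix.one_mul, trace_sub, trace_transpose, trace_one, Fintype.card_fin]
  ring

variable {A}

theorem frobNorm_sq_eq_sum_eigenvalues_sq (hA : A.IsHermitian) :
    frobNorm A ^ 2 = ∑ i, hA.eigenvalues i ^ 2 := by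
  rw [frobNorm_sq, ← conjTranspose_eq_transpose_of_trivial, hA.eq]
  conv_lhs => rw [hA.spectral_theorem, ← map_mul, Unitary.conjStarAlgAut_apply, trace_mul_cycle,
    Unitary.coe_star_mul_self, Matrix.one_mul, diagonal_mul_diagonal, trace_diagonal]
  simp [sq]

theorem frobNorm_sub_one_sq_eq_sum_eigenvalues (hA : A.IsHermitian) :
    frobNorm (A - 1) ^ 2 = ∑ i, (hA.eigenvalues i - 1) ^ 2 := by
  rw [frobNorm_sub_one_sq, frobNorm_sq_eq_sum_eigenvalues_sq hA, hA.trace_eq_sum_eigenvalues]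
  simp [sub_sq, Finset.sum_add_distrib, Finset.mul_sum]

theorem trace_sub_log_det_le_frobNorm_sq (hA : A.IsHermitian)
    (hA2 : ∀ i, 1 / 2 ≤ hA.eigenvalues i) :
    A.trace - n - Real.log A.det ≤ frobNorm (A - 1) ^ 2 := by
  have hne (i : Fin n) : hA.eigenvalues i ≠ 0 := by linarith [hA2 i]
  calc A.trace - n - Real.log A.det
      = ∑ i, (hA.eigenvalues i - 1 - Real.log (hA.eigenvalues i)) := by
        rw [hA.trace_eq_sum_eigenvalues, hA.det_eq_prod_eigenvalues]
        simp [Real.log_prod fun i _ => hne i]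
    _ ≤ ∑ i, (hA.eigenvalues i - 1) ^ 2 :=
        Finset.sum_le_sum fun i _ => sub_one_sub_log_le_sq (hA2 i)
    _ = frobNorm (A - 1) ^ 2 := (frobNorm_sub_one_sq_eq_sum_eigenvalues hA).symm

end Frobenius

/-- Let `S1, S2 ≻ 0` with all eigenvalues of `S2^{-1/2} S1 S2^{-1/2}`
at least `1/2` (here `R = S2^{-1/2}` is the positive definite square root of `S2⁻¹`).
Then `‖N(μ₁,S1) - N(μ₂,S2)‖_TV ≤ ½ √(‖S2^{-1/2}S1S2^{-1/2} - I‖_F² + (μ₂-μ₁)ᵀS2⁻¹(μ₂-μ₁))`. -/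
theorem stmt_13 (n : ℕ) (S1 S2 R : Matrix (Fin n) (Fin n) ℝ)
    (h1 : S1.PosDef) (h2 : S2.PosDef) (hR : R.PosDef) (hRS : R * R = S2⁻¹)
    (heig : (R * S1 * R - (1 / 2 : ℝ) • (1 : Matrix (Fin n) (Fin n) ℝ)).PosSemidef)
    (μ₁ μ₂ : Fin n → ℝ) :
    tvDist (gaussianMeasure n μ₁ S1) (gaussianMeasure n μ₂ S2)
      ≤ (1 / 2) * Real.sqrt (frobNorm (R * S1 * R - 1) ^ 2
          + ((μ₂ - μ₁) ⬝ᵥ S2⁻¹ *ᵥ (μ₂ - μ₁))) := by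
  have hR_symm : Rᵀ = R := hR.isHermitian
  have hM : (R * S1 * R).IsHermitian := by
    simpa only [conjTranspose_eq_transpose_of_trivial, hR_symm] using
      isHermitian_mul_mul_conjTranspose R h1.isHermitian
  have htrace : (S2⁻¹ * S1).trace = (R * S1 * R).trace := by
    rw [← hRS, Matrix.mul_assoc, trace_mul_comm]
  have hdet : (S2⁻¹ * S1).det = (R * S1 * R).det := by
    simp only [← hRS, det_mul]
    ring
  have := isProbabilityMeasure_gaussianMeasure (μ := μ₁) h1
  have := isProbabilityMeasure_gaussianMeasure (μ := μ₂) h2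
  have hbound := trace_sub_log_det_le_frobNorm_sq hM
    (le_eigenvalues_of_posSemidef_sub_smul_one hM heig)
  refine (tvDist_le_sqrt_klDiv (klDiv_gaussianMeasure_ne_top h1 h2)).trans ?_
  rw [toReal_klDiv_gaussianMeasure h1 h2, htrace, hdet]
  refine Real.sqrt_le_iff.mpr ⟨by positivity, ?_⟩
  rw [mul_pow, Real.sq_sqrt (add_nonneg (sq_nonneg _)
    (by simpa only [star_trivial] using h2.inv.posSemidef.dotProduct_mulVec_nonneg (μ₂ - μ₁)))]
  linarith
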